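/- Let V be a finite vertex type, G a connected simple graph on V, and w : Sym2 V → ℝ an edge-weight function that is injective on the edge set of G. Let C be a cycle in G and let e be the edge of C with the largest weight among the edges of C. Then e does not belong to any minimum spanning tree of G: for every connected acyclic spanning subgraph T ≤ G minimizing Σ_{e ∈ edges(T)} w(e), e ∉ edges(T). (The red rule: the edge with the largest weight on a cycle is not included in the MST.) -/

import Mathlib

/-!
Suppose a minimum spanning tree `T` contains the heaviest edge `e` of a cycle. Deleting `e` splits
`T` into two components, one at each endpoint of `e`; the rest of the cycle joins these endpoints,
so it contains another edge `f` between the two components. Replacing `e` by `f` in `T` gives a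
spanning tree which is lighter, because `f` is lighter than `e`.
-/

open SimpleGraph Function

section Exchange

variable {V : Type*} {G F H T : SimpleGraph V} {a b x y : V} {e : Sym2 V}

theorem exists_adj_not_reachable_of_reachable (hH : H.Reachable a b) (hF : ¬F.Reachable a b) :
    ∃ x y, H.Adj x y ∧ ¬F.Reachable x y := by
  obtain ⟨p⟩ := hH
  obtain ⟨d, -, hd₁, hd₂⟩ := p.exists_boundary_dart {z | F.Reachable a z} .rfl hF
  exact ⟨d.fst, d.snd, d.adj, fun h ↦ hd₂ (hd₁.trans h)⟩

theorem exists_mem_edges_ne_not_reachable_of_isCycle {v : V} {c : G.Walk v v} (hc : c.IsCycle)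
    (he : s(a, b) ∈ c.edges) (hab : ¬F.Reachable a b) :
    ∃ x y, s(x, y) ∈ c.edges ∧ s(x, y) ≠ s(a, b) ∧ ¬F.Reachable x y := by
  let C := c.toSubgraph.spanningCoe
  have hcC : ∀ f ∈ c.edges, f ∈ C.edgeSet := fun f hf ↦ c.mem_edges_toSubgraph.mpr hf
  have hreach : (C.deleteEdges {s(a, b)}).Reachable a b :=
    (adj_and_reachable_delete_edges_iff_exists_cycle.mpr
      ⟨v, c.transfer C hcC, hc.transfer hcC, by rwa [Walk.edges_transfer]⟩).2
  obtain ⟨x, y, hxy, hF⟩ := exists_adj_not_reachable_of_reachable hreach hab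
  rw [deleteEdges_adj] at hxy
  exact ⟨x, y, Walk.adj_toSubgraph_iff_mem_edges.mp hxy.1, hxy.2, hF⟩

theorem connected_deleteEdges_sup_edge (hH : H.Connected)
    (hxy : ¬(H.deleteEdges {e}).Reachable x y) : (H.deleteEdges {e} ⊔ edge x y).Connected := by
  by_cases hadj : H.Adj x y
  · have he : e = s(x, y) := by
      by_contra! h
      exact hxy (Adj.reachable (deleteEdges_adj.mpr ⟨hadj, h.symm⟩))
    subst he
    exact hH.mono le_sdiff_sup
  have hne : y ≠ x := by
    rintro rfl
    exact hxy .rfl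
  -- A path from `x` to `y` passes through `e`, so `e` lies on a cycle once `xy` is added.
  obtain ⟨p, hp⟩ := hH.exists_isPath x y
  have hep : e ∈ p.edges := by
    by_contra h
    exact hxy ⟨p.toDeleteEdge e h⟩
  let K := H ⊔ edge x y
  have hKadj : K.Adj y x := .inr ((edge_adj ..).mpr ⟨.inr ⟨rfl, rfl⟩, hne⟩)
  have hcycle : (Walk.cons hKadj (p.mapLe le_sup_left)).IsCycle := by
    refine (Walk.cons_isCycle_iff _ _).mpr ⟨hp.mapLe _, fun h ↦ hadj ?_⟩
    rw [Walk.edges_mapLe_eq_edges] at h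
    exact (p.adj_of_mem_edges h).symm
  have hbridge : ¬K.IsBridge e := fun h ↦ h.notMem_edges_of_isCycle hcycle <| by
    rw [Walk.edges_cons, Walk.edges_mapLe_eq_edges]
    exact .tail _ hep
  have hK : (K.deleteEdges {e}).Connected := by
    induction e with
    | h a b => exact (hH.mono le_sup_left).connected_delete_edge_of_not_isBridge hbridge
  rw [deleteEdges_sup] at hK
  exact hK.mono (sup_le_sup_left (deleteEdges_le _) _)

theorem isTree_deleteEdges_sup_edge (hT : T.IsTree)
    (hxy : ¬(T.deleteEdges {e}).Reachable x y) : (T.deleteEdges {e} ⊔ edge x y).IsTree :=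
  ⟨connected_deleteEdges_sup_edge hT.connected hxy,
    (hT.isAcyclic.anti (deleteEdges_le _)).sup_edge_of_not_reachable hxy⟩

end Exchange

section Weight

variable {V M : Type*} [AddCommMonoid M] {w : Sym2 V → M} {G H T : SimpleGraph V} {x y : V}
  {e : Sym2 V}

/-- The total weight of the edges of a graph. Being a `finsum`, it is `0` by convention when
infinitely many edges have nonzero weight. -/
noncomputable def totalWeight (w : Sym2 V → M) (H : SimpleGraph V) : M :=
  ∑ᶠ e ∈ H.edgeSet, w e

theorem totalWeight_eq_add_deleteEdges (hw : (H.edgeSet ∩ support w).Finite)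
    (he : e ∈ H.edgeSet) :
    totalWeight w H = w e + totalWeight w (H.deleteEdges {e}) := by
  rw [totalWeight, totalWeight, edgeSet_deleteEdges,
    ← finsum_mem_add_sdiff' (Set.singleton_subset_iff.mpr he) hw, finsum_mem_singleton]

theorem totalWeight_sup_edge (hw : (H.edgeSet ∩ support w).Finite) (hne : x ≠ y)
    (hadj : ¬H.Adj x y) :
    totalWeight w (H ⊔ edge x y) = w s(x, y) + totalWeight w H := by
  rw [totalWeight, totalWeight, edgeSet_sup, edgeSet_edge_of_ne hne, Set.union_singleton,
    finsum_mem_insert' _ (mt (mem_edgeSet H).mp hadj) hw]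

/-- `T` is a spanning tree of `G` of minimum total weight. It spans `G` because both are graphs on
the same vertex type. -/
structure IsMinSpanningTree [LE M] (G : SimpleGraph V) (w : Sym2 V → M) (T : SimpleGraph V) :
    Prop where
  le : T ≤ G
  isTree : T.IsTree
  totalWeight_le : ∀ T' ≤ G, T'.IsTree → totalWeight w T ≤ totalWeight w T'

theorem IsMinSpanningTree.le_of_not_reachable_deleteEdges [LE M] [AddRightReflectLE M]
    (hT : IsMinSpanningTree G w T) (hw : (G.edgeSet ∩ support w).Finite) (he : e ∈ T.edgeSet)
    (hadj : G.Adj x y) (hxy : ¬(T.deleteEdges {e}).Reachable x y) : w e ≤ w s(x, y) := by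
  have hFT : T.deleteEdges {e} ≤ T := deleteEdges_le _
  have hle : T.deleteEdges {e} ⊔ edge x y ≤ G :=
    sup_le (hFT.trans hT.le) ((edge_le_iff G).mpr (.inr hadj))
  have hfin {H : SimpleGraph V} (hH : H ≤ G) : (H.edgeSet ∩ support w).Finite :=
    hw.subset (Set.inter_subset_inter_left _ (edgeSet_mono hH))
  have hweight := hT.totalWeight_le _ hle (isTree_deleteEdges_sup_edge hT.isTree hxy)
  rw [totalWeight_eq_add_deleteEdges (hfin hT.le) he,
    totalWeight_sup_edge (hfin (hFT.trans hT.le)) hadj.ne (mt Adj.reachable hxy)] at hweight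
  exact le_of_add_le_add_right hweight

end Weight

theorem red_rule_general {V M : Type*} [AddCommMonoid M] [Preorder M] [AddRightReflectLE M]
    {G T : SimpleGraph V} {w : Sym2 V → M} (hw : (G.edgeSet ∩ support w).Finite)
    {v : V} {c : G.Walk v v} (hc : c.IsCycle) {e : Sym2 V} (he : e ∈ c.edges)
    (hemax : ∀ f ∈ c.edges, f ≠ e → w f < w e) (hT : IsMinSpanningTree G w T) :
    e ∉ T.edgeSet := by
  intro heT
  induction e with | h a b
  have hab : ¬(T.deleteEdges {s(a, b)}).Reachable a b :=
    isBridge_iff.mp (isAcyclic_iff_forall_isBridge.mp hT.isTree.isAcyclic heT)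
  obtain ⟨x, y, hxyc, hne, hxy⟩ := exists_mem_edges_ne_not_reachable_of_isCycle hc he hab
  exact (hemax _ hxyc hne).not_ge
    (hT.le_of_not_reachable_deleteEdges hw heT (c.adj_of_mem_edges hxyc) hxy)

/-- The red rule: in a connected graph with edge weights injective on the edge
set, the edge with the largest weight on a cycle does not belong to any
minimum spanning tree. -/
theorem red_rule {V : Type*} [Fintype V] (G : SimpleGraph V) (w : Sym2 V → ℝ)
    (hG : G.Connected) (hw : Set.InjOn w G.edgeSet)
    (v : V) (c : G.Walk v v) (hc : c.IsCycle)
    (e : Sym2 V) (he : e ∈ c.edges) (hemax : ∀ e' ∈ c.edges, w e' ≤ w e) :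
    ∀ T : SimpleGraph V, T ≤ G → T.Connected → T.IsAcyclic →
      (∀ T' : SimpleGraph V, T' ≤ G → T'.Connected → T'.IsAcyclic →
        (∑ᶠ e'' ∈ T.edgeSet, w e'') ≤ ∑ᶠ e'' ∈ T'.edgeSet, w e'') →
      e ∉ T.edgeSet := by
  intro T hTG hTc hTa hmin
  exact red_rule_general (Set.toFinite _) hc he
    (fun f hf hne ↦ (hemax f hf).lt_of_ne fun h ↦
      hne (hw (c.edges_subset_edgeSet hf) (c.edges_subset_edgeSet he) h))
    ⟨hTG, ⟨hTc, hTa⟩, fun T' hT'G hT' ↦ hmin T' hT'G hT'.connected hT'.isAcyclic⟩
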